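/- Let K be a non-Archimedean field, V a K-vector space of finite dimension d, and N, N', N'' three non-Archimedean norms on V. Then the relative volume satisfies the cocycle property vol(N,N') = vol(N,N'') + vol(N'',N'). -/

import Mathlib

open scoped BigOperators

/-- A non-Archimedean norm on a `K`-vector space `V`. -/
def IsNAnorm (K : Type*) {V : Type*} [NormedField K] [AddCommGroup V] [Module K V]
    (N : V → ℝ) : Prop :=
  (∀ v, 0 ≤ N v) ∧ (∀ v, N v = 0 ↔ v = 0) ∧
  (∀ (a : K) (v : V), N (a • v) = ‖a‖ * N v) ∧
  (∀ v w : V, N (v + w) ≤ max (N v) (N w))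

/-- The sup-distance `d_∞` between two norms on `V`. -/
noncomputable def dInfty {V : Type*} [AddCommGroup V] (N N' : V → ℝ) : ℝ :=
  sSup {r | ∃ v : V, v ≠ 0 ∧ r = |Real.log (N' v) - Real.log (N v)|}

/-- The `i`-th relative spectral value `λᵢ(N, N')`:
the supremum, over subspaces `W ⊆ V` with `dim W ≥ i`, of
`inf_{w ∈ W ∖ {0}} (log N'(w) − log N(w))`. -/
noncomputable def specVal (K : Type*) {V : Type*} [Field K] [AddCommGroup V] [Module K V]
    (N N' : V → ℝ) (i : ℕ) : ℝ :=
  sSup {r | ∃ W : Submodule K V, i ≤ Module.finrank K W ∧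
    r = sInf {s | ∃ w ∈ W, w ≠ (0 : V) ∧ s = Real.log (N' w) - Real.log (N w)}}

/-- The relative volume `vol(N, N') = (1/d)·Σ_{i=1}^d λᵢ(N, N')`, where `d = dim V`. -/
noncomputable def relVol (K : Type*) (V : Type*) [Field K] [AddCommGroup V] [Module K V]
    (N N' : V → ℝ) : ℝ :=
  (Module.finrank K V : ℝ)⁻¹ *
    ∑ i ∈ Finset.range (Module.finrank K V), specVal K N N' (i + 1)


namespace RelVolAux

open Module

variable {K : Type*} [NormedField K]

section basic
variable {V : Type*} [AddCommGroup V] [Module K V] {N : V → ℝ}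

theorem pos (hN : IsNAnorm K N) {v : V} (hv : v ≠ 0) : 0 < N v :=
  lt_of_le_of_ne (hN.1 v) (fun h => hv ((hN.2.1 v).1 h.symm))

theorem map_zero (hN : IsNAnorm K N) : N 0 = 0 := (hN.2.1 0).2 rfl

theorem map_neg (hN : IsNAnorm K N) (v : V) : N (-v) = N v := by
  have := hN.2.2.1 (-1) v
  simpa using this

theorem sub_le (hN : IsNAnorm K N) (v w : V) : N (v - w) ≤ max (N v) (N w) := by
  have := hN.2.2.2 v (-w)
  rwa [map_neg hN, ← sub_eq_add_neg] at this

theorem sum_le (hN : IsNAnorm K N) {ι : Type*} (s : Finset ι) (f : ι → V) {B : ℝ} (hB : 0 ≤ B)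
    (h : ∀ i ∈ s, N (f i) ≤ B) : N (∑ i ∈ s, f i) ≤ B := by
  classical
  induction s using Finset.induction_on with
  | empty => simpa [map_zero hN] using hB
  | insert a s ha ih =>
    rw [Finset.sum_insert ha]
    refine (hN.2.2.2 _ _).trans (max_le (h a (by simp)) (ih fun i hi => h i (by simp [hi])))

theorem restrict (hN : IsNAnorm K N) (H : Submodule K V) :
    IsNAnorm K (fun w : H => N (w : V)) := by
  refine ⟨fun v => hN.1 _, fun v => ?_, fun a v => hN.2.2.1 a v, fun v w => hN.2.2.2 v w⟩
  rw [hN.2.1]; simp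

end basic

/-- Every linear functional is bounded. -/
theorem functional_bounded [CompleteSpace K] (n : ℕ) :
    ∀ {V : Type*} [AddCommGroup V] [Module K V] [FiniteDimensional K V] (N : V → ℝ),
      IsNAnorm K N → finrank K V = n → ∀ f : V →ₗ[K] K, ∃ C : ℝ, 0 < C ∧ ∀ v, ‖f v‖ ≤ C * N v := by
  induction n using Nat.strong_induction_on with
  | _ n ih =>
  intro V _ _ _ N hN hn f
  by_cases hf : f = 0
  · exact ⟨1, one_pos, fun v => by simp [hf, hN.1 v]⟩
  obtain ⟨u0, hu0⟩ : ∃ u, f u ≠ 0 := by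
    by_contra! h
    exact hf (LinearMap.ext h)
  obtain ⟨u, hu⟩ : ∃ u, f u = 1 := ⟨(f u0)⁻¹ • u0, by simp [hu0]⟩
  have hlt : finrank K (LinearMap.ker f) < n := by
    rw [← hn]
    apply Submodule.finrank_lt
    rwa [Ne, LinearMap.ker_eq_top]
  have ihH := ih _ hlt (fun w : LinearMap.ker f => N (w : V)) (restrict hN _) rfl
  -- distance from u to the kernel is positive
  obtain ⟨δ, hδ, hdist⟩ : ∃ δ : ℝ, 0 < δ ∧ ∀ h : LinearMap.ker f, δ ≤ N (u - h) := by
    by_contra! hcon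
    have hseq : ∀ k : ℕ, ∃ h : LinearMap.ker f, N (u - h) < 1 / ((k : ℝ) + 1) :=
      fun k => hcon _ (by positivity)
    choose h hh using hseq
    have hlim : Filter.Tendsto (fun k => N (u - h k)) Filter.atTop (nhds 0) :=
      squeeze_zero (fun k => hN.1 _) (fun k => (hh k).le) tendsto_one_div_add_atTop_nhds_zero_nat
    let b := finBasis K (LinearMap.ker f)
    have hcau : ∀ i, CauchySeq (fun k => b.coord i (h k)) := by
      intro i
      obtain ⟨C, hC, hb⟩ := ihH (b.coord i)
      refine cauchySeq_of_le_tendsto_0 (fun k : ℕ => C * (1 / ((k : ℝ) + 1))) ?_ ?_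
      · intro p q k hp hq
        rw [dist_eq_norm, ← _root_.map_sub]
        refine (hb _).trans (mul_le_mul_of_nonneg_left ?_ hC.le)
        have e : ((h p - h q : LinearMap.ker f) : V) = (u - h q) - (u - h p) := by
          push_cast; abel
        rw [e]
        refine (sub_le hN _ _).trans (max_le ((hh q).le.trans ?_) ((hh p).le.trans ?_))
        · exact one_div_le_one_div_of_le (by positivity) (by exact_mod_cast Nat.succ_le_succ hq)
        · exact one_div_le_one_div_of_le (by positivity) (by exact_mod_cast Nat.succ_le_succ hp)
      · simpa using tendsto_one_div_add_atTop_nhds_zero_nat.const_mul C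
    choose a ha using fun i => cauchySeq_tendsto_of_complete (hcau i)
    let w : LinearMap.ker f := ∑ i, a i • b i
    have hS : Filter.Tendsto (fun k => ∑ i, ‖b.coord i (h k) - a i‖ * N (b i))
        Filter.atTop (nhds 0) := by
      have : Filter.Tendsto (fun k => ∑ i, ‖b.coord i (h k) - a i‖ * N (b i))
        Filter.atTop (nhds (∑ i, ‖a i - a i‖ * N (b i))) := by
        refine tendsto_finsetSum _ fun i _ => ?_
        exact (((ha i).sub_const _).norm).mul_const _
      simpa using this
    have hw : ∀ k, N ((h k : V) - w) ≤ ∑ i, ‖b.coord i (h k) - a i‖ * N (b i) := by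
      intro k
      have e : ((h k : V) - w) = ∑ i, (b.coord i (h k) - a i) • (b i : V) := by
        have : h k - w = ∑ i, (b.coord i (h k) - a i) • b i := by
          simp only [sub_smul, Finset.sum_sub_distrib, w]
          congr 1
          exact (b.sum_repr (h k)).symm
        have := congrArg (Subtype.val) this
        simpa using this
      rw [e]
      refine sum_le hN _ _ (Finset.sum_nonneg fun i _ => mul_nonneg (norm_nonneg _) (hN.1 _)) ?_
      intro i _
      rw [hN.2.2.1]
      exact Finset.single_le_sum (f := fun i => ‖b.coord i (h k) - a i‖ * N (b i))
        (fun i _ => mul_nonneg (norm_nonneg _) (hN.1 _)) (Finset.mem_univ i)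
    have hfin : N (u - w) ≤ 0 := by
      have h0 : Filter.Tendsto (fun k => N (u - h k) + ∑ i, ‖b.coord i (h k) - a i‖ * N (b i))
          Filter.atTop (nhds 0) := by simpa using hlim.add hS
      refine ge_of_tendsto' h0 fun k => ?_
      have e : u - (w : V) = (u - h k) + (h k - w) := by abel
      rw [e]
      refine (hN.2.2.2 _ _).trans (max_le ?_ ?_)
      · exact le_add_of_nonneg_right ((hN.1 _).trans (hw k))
      · exact (hw k).trans (le_add_of_nonneg_left (hN.1 _))
    have : u - (w : V) = 0 := (hN.2.1 _).1 (le_antisymm hfin (hN.1 _))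
    have hfw : f w = 0 := w.2
    rw [sub_eq_zero] at this
    rw [← this, hu] at hfw
    exact one_ne_zero hfw
  refine ⟨δ⁻¹, inv_pos.2 hδ, fun v => ?_⟩
  by_cases hv : f v = 0
  · simp only [hv, norm_zero]; exact mul_nonneg (inv_pos.2 hδ).le (hN.1 _)
  have key := hdist ⟨u - (f v)⁻¹ • v, by simp [hu, hv]⟩
  simp only [sub_sub_cancel] at key
  rw [hN.2.2.1, norm_inv] at key
  have hp : 0 < ‖f v‖ := norm_pos_iff.2 hv
  rw [inv_mul_eq_div, le_div_iff₀ hp] at key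
  rw [inv_mul_eq_div, le_div_iff₀ hδ]
  linarith

/-- Almost orthogonal complement of a hyperplane. -/
theorem exists_almost_min [CompleteSpace K] {V : Type*} [AddCommGroup V] [Module K V]
    [FiniteDimensional K V] {N : V → ℝ} (hN : IsNAnorm K N) (g : V →ₗ[K] K) (hg : g ≠ 0)
    {C : ℝ} (hC : 1 < C) : ∃ u, g u = 1 ∧ ∀ w, ‖g w‖ * N u ≤ C * N w := by
  obtain ⟨D, hD, hb⟩ := functional_bounded _ N hN rfl g
  obtain ⟨u0, hu0⟩ : ∃ u, g u ≠ 0 := by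
    by_contra! h
    exact hg (LinearMap.ext h)
  let S : Set ℝ := {r | ∃ u, g u = 1 ∧ r = N u}
  have hne : S.Nonempty := ⟨_, (g u0)⁻¹ • u0, by simp [hu0], rfl⟩
  have hlow : ∀ r ∈ S, D⁻¹ ≤ r := by
    rintro r ⟨u, hu, rfl⟩
    have := hb u
    rw [hu, norm_one] at this
    rw [inv_eq_one_div, div_le_iff₀ hD]; linarith
  have hI : 0 < sInf S := (inv_pos.2 hD).trans_le (le_csInf hne hlow)
  obtain ⟨_, ⟨u, hu, rfl⟩, hlt⟩ := exists_lt_of_csInf_lt hne (show sInf S < C * sInf S by nlinarith)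
  refine ⟨u, hu, fun w => ?_⟩
  by_cases hw : g w = 0
  · simp only [hw, norm_zero, zero_mul]; exact mul_nonneg (by linarith) (hN.1 _)
  have h1 : sInf S ≤ N ((g w)⁻¹ • w) := csInf_le ⟨_, hlow⟩ ⟨_, by simp [hw], rfl⟩
  have hp : 0 < ‖g w‖ := norm_pos_iff.2 hw
  rw [hN.2.2.1, norm_inv, inv_mul_eq_div, le_div_iff₀ hp] at h1
  nlinarith

/-- Almost Hahn-Banach. -/
theorem exists_functional [CompleteSpace K] (n : ℕ) :
    ∀ {V : Type*} [AddCommGroup V] [Module K V] [FiniteDimensional K V] (N : V → ℝ),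
      IsNAnorm K N → finrank K V = n → ∀ v : V, v ≠ 0 → ∀ C : ℝ, 1 < C →
      ∃ f : V →ₗ[K] K, f v = 1 ∧ ∀ w, ‖f w‖ * N v ≤ C * N w := by
  induction n using Nat.strong_induction_on with
  | _ n ih =>
  intro V _ _ _ N hN hn v hv C hC
  by_cases hsp : Submodule.span K {v} = ⊤
  · obtain ⟨f0, hf0⟩ : ∃ f : V →ₗ[K] K, f v ≠ 0 := by
      by_contra! h
      exact hv ((Module.forall_dual_apply_eq_zero_iff K v).1 h)
    refine ⟨(f0 v)⁻¹ • f0, by simp [hf0], fun w => ?_⟩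
    obtain ⟨a, rfl⟩ := Submodule.mem_span_singleton.1 (hsp ▸ Submodule.mem_top : w ∈ Submodule.span K {v})
    have e : ((f0 v)⁻¹ • f0) (a • v) = a := by
      simp only [LinearMap.smul_apply, _root_.map_smul, smul_eq_mul]
      field_simp
    rw [e, hN.2.2.1]
    exact le_mul_of_one_le_left (mul_nonneg (norm_nonneg _) (hN.1 _)) hC.le
  obtain ⟨g, hg, hgv⟩ := Submodule.exists_le_ker_of_lt_top _ (lt_top_iff_ne_top.2 hsp)
  have hvg : v ∈ LinearMap.ker g := hgv (Submodule.mem_span_singleton_self v)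
  have hlt : finrank K (LinearMap.ker g) < n := by
    rw [← hn]
    apply Submodule.finrank_lt
    rwa [Ne, LinearMap.ker_eq_top]
  have hs1 : 1 < √C := by rw [Real.lt_sqrt] <;> linarith
  have hss : √C * √C = C := Real.mul_self_sqrt (by linarith)
  obtain ⟨f0, hf0v, hf0⟩ := ih _ hlt (fun w : LinearMap.ker g => N (w : V)) (restrict hN _) rfl
    ⟨v, hvg⟩ (by simpa using hv) (√C) hs1
  obtain ⟨u, hu, hmin⟩ := exists_almost_min hN g hg hs1
  let P : V →ₗ[K] LinearMap.ker g :=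
    LinearMap.codRestrict (LinearMap.ker g) (LinearMap.id - g.smulRight u) (by simp [hu])
  have hP : ∀ w, (P w : V) = w - g w • u := fun w => rfl
  refine ⟨f0 ∘ₗ P, ?_, fun w => ?_⟩
  · have : P v = ⟨v, hvg⟩ := by
      ext; rw [hP]; simp [LinearMap.mem_ker.1 hvg]
    simp [this, hf0v]
  · have h1 := hf0 (P w)
    have h2 : N (P w) ≤ √C * N w := by
      rw [hP]
      refine (sub_le hN _ _).trans (max_le ?_ ?_)
      · exact le_mul_of_one_le_left (hN.1 _) hs1.le
      · rw [hN.2.2.1]; exact hmin w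
    simp only [LinearMap.comp_apply]
    calc _ ≤ √C * N (P w) := h1
      _ ≤ √C * (√C * N w) := mul_le_mul_of_nonneg_left h2 (by linarith)
      _ = C * N w := by rw [← mul_assoc, hss]

theorem exists_comparison [CompleteSpace K] {V : Type*} [AddCommGroup V] [Module K V]
    [FiniteDimensional K V] {N N' : V → ℝ} (hN : IsNAnorm K N) (hN' : IsNAnorm K N') :
    ∃ R : ℝ, ∀ w, N' w ≤ R * N w := by
  let b := finBasis K V
  choose C hC hb using fun i => functional_bounded _ N hN rfl (b.coord i)
  refine ⟨∑ i, C i * N' (b i), fun w => ?_⟩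
  have hnn : ∀ i, 0 ≤ C i * N' (b i) := fun i => mul_nonneg (hC i).le (hN'.1 _)
  conv_lhs => rw [← b.sum_repr w]
  refine sum_le hN' _ _ (mul_nonneg (Finset.sum_nonneg fun i _ => hnn i) (hN.1 _)) fun i _ => ?_
  rw [hN'.2.2.1]
  have h1 : ‖b.repr w i‖ ≤ C i * N w := hb i w
  calc ‖b.repr w i‖ * N' (b i) ≤ (C i * N w) * N' (b i) :=
        mul_le_mul_of_nonneg_right h1 (hN'.1 _)
    _ = (C i * N' (b i)) * N w := by ring
    _ ≤ _ := mul_le_mul_of_nonneg_right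
        (Finset.single_le_sum (f := fun i => C i * N' (b i)) (fun i _ => hnn i)
          (Finset.mem_univ i)) (hN.1 _)

/-- Simultaneous almost orthogonal splitting. -/
theorem exists_split [CompleteSpace K] {V : Type*} [AddCommGroup V] [Module K V]
    [FiniteDimensional K V] [Nontrivial V] {N N' : V → ℝ} (hN : IsNAnorm K N)
    (hN' : IsNAnorm K N') {C : ℝ} (hC : 1 < C) :
    ∃ (v : V) (f : V →ₗ[K] K), f v = 1 ∧ (∀ w, ‖f w‖ * N v ≤ C * N w) ∧
      (∀ w, ‖f w‖ * N' v ≤ C * N' w) := by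
  obtain ⟨R0, hR0⟩ := exists_comparison hN hN'
  have hs1 : 1 < √C := by rw [Real.lt_sqrt] <;> linarith
  have hss : √C * √C = C := Real.mul_self_sqrt (by linarith)
  let S : Set ℝ := {r | ∃ w : V, w ≠ 0 ∧ r = N' w / N w}
  obtain ⟨v0, hv0⟩ := exists_ne (0 : V)
  have hne : S.Nonempty := ⟨_, v0, hv0, rfl⟩
  have hbdd : BddAbove S := by
    refine ⟨R0, ?_⟩
    rintro r ⟨w, hw, rfl⟩
    rw [div_le_iff₀ (pos hN hw)]
    exact hR0 w
  set R := sSup S with hR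
  have hRpos : 0 < R :=
    (div_pos (pos hN' hv0) (pos hN hv0)).trans_le (le_csSup hbdd ⟨v0, hv0, rfl⟩)
  have hle : ∀ w, N' w ≤ R * N w := by
    intro w
    by_cases hw : w = 0
    · simp [hw, map_zero hN, map_zero hN']
    · rw [← div_le_iff₀ (pos hN hw)]
      exact le_csSup hbdd ⟨w, hw, rfl⟩
  obtain ⟨_, ⟨v, hv, rfl⟩, hlt⟩ := exists_lt_of_lt_csSup hne
    (show R / √C < sSup S from div_lt_self hRpos hs1)
  rw [div_lt_div_iff₀ (by linarith) (pos hN hv)] at hlt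
  obtain ⟨f, hfv, hf⟩ := exists_functional _ N' hN' rfl v hv (√C) hs1
  refine ⟨v, f, hfv, fun w => ?_, fun w => (hf w).trans ?_⟩
  · have h1 : R * (‖f w‖ * N v) ≤ R * (C * N w) := by
      calc R * (‖f w‖ * N v) = ‖f w‖ * (R * N v) := by ring
        _ ≤ ‖f w‖ * (N' v * √C) := mul_le_mul_of_nonneg_left hlt.le (norm_nonneg _)
        _ = √C * (‖f w‖ * N' v) := by ring
        _ ≤ √C * (√C * N' w) := mul_le_mul_of_nonneg_left (hf w) (by linarith)
        _ = C * N' w := by rw [← mul_assoc, hss]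
        _ ≤ C * (R * N w) := mul_le_mul_of_nonneg_left (hle w) (by linarith)
        _ = _ := by ring
    exact le_of_mul_le_mul_left h1 hRpos
  · refine mul_le_mul_of_nonneg_right ?_ (hN'.1 _)
    nlinarith

/-- `b` is almost orthogonal with respect to `N`. -/
def AlmostOrth {V : Type*} [AddCommGroup V] [Module K V] {ι : Type*} (N : V → ℝ) (C : ℝ)
    (b : Basis ι K V) : Prop := ∀ w i, ‖b.repr w i‖ * N (b i) ≤ C * N w

theorem exists_basis [CompleteSpace K] (n : ℕ) :
    ∀ {V : Type*} [AddCommGroup V] [Module K V] [FiniteDimensional K V] (N N' : V → ℝ),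
      IsNAnorm K N → IsNAnorm K N' → finrank K V = n → ∀ C : ℝ, 1 < C →
      ∃ b : Basis (Fin n) K V, AlmostOrth N C b ∧ AlmostOrth N' C b := by
  induction n with
  | zero =>
    intro V _ _ _ N N' hN hN' hn C hC
    exact ⟨finBasisOfFinrankEq K V hn, fun w i => i.elim0, fun w i => i.elim0⟩
  | succ n ih =>
    intro V _ _ _ N N' hN hN' hn C hC
    have hs1 : 1 < √C := by rw [Real.lt_sqrt] <;> linarith
    have hss : √C * √C = C := Real.mul_self_sqrt (by linarith)
    have : Nontrivial V := Module.nontrivial_of_finrank_pos (R := K) (by omega)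
    obtain ⟨v, f, hfv, hf, hf'⟩ := exists_split hN hN' hs1
    have hf0 : f ≠ 0 := by rintro rfl; simp at hfv
    have hdim : finrank K (LinearMap.ker f) = n := by
      have h1 := LinearMap.finrank_range_add_finrank_ker f
      rw [LinearMap.range_eq_top.2 (LinearMap.surjective hf0), finrank_top, finrank_self] at h1
      omega
    obtain ⟨b, hb, hb'⟩ := ih (fun w : LinearMap.ker f => N (w : V))
      (fun w : LinearMap.ker f => N' (w : V)) (restrict hN _) (restrict hN' _) hdim (√C) hs1
    let P : V →ₗ[K] LinearMap.ker f :=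
      LinearMap.codRestrict (LinearMap.ker f) (LinearMap.id - f.smulRight v) (by simp [hfv])
    have hP : ∀ w, (P w : V) = w - f w • v := fun w => rfl
    let B : Basis (Fin (n + 1)) K V := Basis.mkFinCons v b
      (by
        intro c x hx h
        have := congrArg f h
        simpa [hfv, LinearMap.mem_ker.1 hx] using this)
      (fun z => ⟨- f z, by simp [hfv]⟩)
    have hB0 : B 0 = v := by simp [B]
    have hBs : ∀ i : Fin n, B i.succ = b i := fun i => by simp [B]
    have hrepr : ∀ w, (B.repr w : Fin (n + 1) → K) = Fin.cons (f w) (b.repr (P w)) := by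
      intro w
      have e : w = ∑ i, (Fin.cons (f w) (b.repr (P w)) : Fin (n + 1) → K) i • B i := by
        rw [Fin.sum_univ_succ]
        simp only [Fin.cons_zero, Fin.cons_succ, hB0, hBs]
        have h2 := congrArg Subtype.val (b.sum_repr (P w))
        rw [hP] at h2
        simp only [Submodule.coe_sum, Submodule.coe_smul] at h2
        rw [h2]; abel
      conv_lhs => rw [e]
      exact B.repr_sum_self _
    have gen : ∀ M : V → ℝ, IsNAnorm K M → (∀ w, ‖f w‖ * M v ≤ √C * M w) →
        AlmostOrth (fun w : LinearMap.ker f => M (w : V)) √C b → AlmostOrth M C B := by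
      intro M hM hfM hbM w i
      rw [hrepr]
      refine Fin.cases ?_ (fun i => ?_) i
      · rw [Fin.cons_zero, hB0]
        refine (hfM w).trans (mul_le_mul_of_nonneg_right (by nlinarith) (hM.1 _))
      · rw [Fin.cons_succ, hBs]
        have h2 : M (P w) ≤ √C * M w := by
          rw [hP]
          refine (sub_le hM _ _).trans (max_le ?_ ?_)
          · exact le_mul_of_one_le_left (hM.1 _) hs1.le
          · rw [hM.2.2.1]; exact hfM w
        calc _ ≤ √C * M (P w) := hbM (P w) i
          _ ≤ √C * (√C * M w) := mul_le_mul_of_nonneg_left h2 (by linarith)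
          _ = C * M w := by rw [← mul_assoc, hss]
    exact ⟨B, gen N hN hf hb, gen N' hN' hf' hb'⟩

theorem det_bound [IsUltrametricDist K] {V : Type*} [AddCommGroup V] [Module K V] {n : ℕ}
    {N : V → ℝ} (hN : IsNAnorm K N) {C : ℝ} (hC : 1 < C) (b b' : Basis (Fin n) K V)
    (hb : AlmostOrth N C b) :
    ‖b.det b'‖ * ∏ i, N (b i) ≤ C ^ n * ∏ i, N (b' i) := by
  have hpos : 0 < ∏ i, N (b i) := Finset.prod_pos fun i _ => pos hN (b.ne_zero i)
  rw [← le_div_iff₀ hpos, Basis.det_apply, Matrix.det_apply]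
  refine IsUltrametricDist.norm_sum_le_of_forall_le_of_nonneg ?_ fun σ _ => ?_
  · exact div_nonneg (mul_nonneg (by positivity) (Finset.prod_nonneg fun i _ => hN.1 _)) hpos.le
  rw [le_div_iff₀ hpos]
  have e1 : ‖Equiv.Perm.sign σ • ∏ i, b.toMatrix b' (σ i) i‖ = ∏ i, ‖b.repr (b' i) (σ i)‖ := by
    rcases Int.units_eq_one_or (Equiv.Perm.sign σ) with h | h <;>
      simp [h, Basis.toMatrix_apply, norm_prod]
  rw [e1, ← Equiv.prod_comp σ (fun i => N (b i)), ← Finset.prod_mul_distrib]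
  have e2 : C ^ n * ∏ i, N (b' i) = ∏ i, (C * N (b' i)) := by
    rw [Finset.prod_mul_distrib]; simp
  rw [e2]
  exact Finset.prod_le_prod (fun i _ => mul_nonneg (norm_nonneg _) (hN.1 _)) fun i _ => hb _ _

/-- Logarithmic form of the determinant comparison. -/
theorem det_bound_log [IsUltrametricDist K] {V : Type*} [AddCommGroup V] [Module K V] {n : ℕ}
    {N : V → ℝ} (hN : IsNAnorm K N) {η : ℝ} (hη : 0 < η) (b b' : Basis (Fin n) K V)
    (hb : AlmostOrth N (Real.exp η) b) :
    Real.log ‖b.det b'‖ + ∑ i, Real.log (N (b i)) ≤ n * η + ∑ i, Real.log (N (b' i)) := by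
  have h := det_bound hN (Real.one_lt_exp_iff.2 hη) b b' hb
  have h1 : ∀ b : Basis (Fin n) K V, ∀ i, N (b i) ≠ 0 := fun b i => (pos hN (b.ne_zero i)).ne'
  have h2 : ‖b.det b'‖ ≠ 0 := norm_ne_zero_iff.2 (b.isUnit_det b').ne_zero
  have h3 : ∀ b : Basis (Fin n) K V, ∏ i, N (b i) ≠ 0 := fun b =>
    Finset.prod_ne_zero_iff.2 fun i _ => h1 b i
  have h4 := Real.log_le_log (lt_of_le_of_ne (mul_nonneg (norm_nonneg _)
    (Finset.prod_nonneg fun i _ => hN.1 _)) (mul_ne_zero h2 (h3 b)).symm) h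
  rw [Real.log_mul h2 (h3 b), Real.log_mul (by positivity) (h3 b'), Real.log_pow, Real.log_exp,
    Real.log_prod (fun i _ => h1 b i), Real.log_prod (fun i _ => h1 b' i)] at h4
  exact h4

theorem log_ratio_ge {V : Type*} [AddCommGroup V] [Module K V] {n : ℕ}
    {N N' : V → ℝ} (hN : IsNAnorm K N) (hN' : IsNAnorm K N') {η t : ℝ}
    (b : Basis (Fin n) K V) (hb : AlmostOrth N' (Real.exp η) b) {w : V} (hw : w ≠ 0)
    (h : ∀ j, b.repr w j ≠ 0 → t ≤ Real.log (N' (b j)) - Real.log (N (b j))) :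
    t - η ≤ Real.log (N' w) - Real.log (N w) := by
  have key : N w ≤ Real.exp (η - t) * N' w := by
    conv_lhs => rw [← b.sum_repr w]
    refine sum_le hN _ _ (mul_nonneg (Real.exp_pos _).le (hN'.1 _)) fun j _ => ?_
    rw [hN.2.2.1]
    by_cases hj : b.repr w j = 0
    · rw [hj, norm_zero, zero_mul]; exact mul_nonneg (Real.exp_pos _).le (hN'.1 _)
    have h1 := h j hj
    have hp := pos hN (b.ne_zero j)
    have hp' := pos hN' (b.ne_zero j)
    have h2 : N (b j) ≤ Real.exp (-t) * N' (b j) := by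
      rw [← Real.log_le_log_iff hp (by positivity), Real.log_mul (by positivity) hp'.ne',
        Real.log_exp]
      linarith
    calc ‖b.repr w j‖ * N (b j) ≤ ‖b.repr w j‖ * (Real.exp (-t) * N' (b j)) :=
          mul_le_mul_of_nonneg_left h2 (norm_nonneg _)
      _ = Real.exp (-t) * (‖b.repr w j‖ * N' (b j)) := by ring
      _ ≤ Real.exp (-t) * (Real.exp η * N' w) :=
          mul_le_mul_of_nonneg_left (hb w j) (Real.exp_pos _).le
      _ = _ := by rw [← mul_assoc, ← Real.exp_add]; ring_nf
  have hp := pos hN hw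
  have hp' := pos hN' hw
  have h3 := Real.log_le_log hp key
  rw [Real.log_mul (by positivity) hp'.ne', Real.log_exp] at h3
  linarith

theorem log_ratio_le {V : Type*} [AddCommGroup V] [Module K V] {n : ℕ}
    {N N' : V → ℝ} (hN : IsNAnorm K N) (hN' : IsNAnorm K N') {η t : ℝ}
    (b : Basis (Fin n) K V) (hb : AlmostOrth N (Real.exp η) b) {w : V} (hw : w ≠ 0)
    (h : ∀ j, b.repr w j ≠ 0 → Real.log (N' (b j)) - Real.log (N (b j)) ≤ t) :
    Real.log (N' w) - Real.log (N w) ≤ t + η := by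
  have := log_ratio_ge (t := -t) hN' hN b hb hw (fun j hj => by linarith [h j hj])
  linarith

theorem specVal_bound {V : Type*} [AddCommGroup V] [Module K V] {n : ℕ}
    {N N' : V → ℝ} (hN : IsNAnorm K N) (hN' : IsNAnorm K N') {η : ℝ}
    (b : Basis (Fin n) K V) (hb : AlmostOrth N (Real.exp η) b)
    (hb' : AlmostOrth N' (Real.exp η) b)
    (hanti : Antitone fun j => Real.log (N' (b j)) - Real.log (N (b j))) (i : Fin n) :
    |specVal K N N' (i + 1) - (Real.log (N' (b i)) - Real.log (N (b i)))| ≤ η := by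
  have : FiniteDimensional K V := b.finiteDimensional_of_finite
  have hn : finrank K V = n := by simpa using finrank_eq_card_basis b
  set μ : Fin n → ℝ := fun j => Real.log (N' (b j)) - Real.log (N (b j)) with hμ
  -- global lower bound
  obtain ⟨m, hm⟩ : ∃ m, ∀ j, m ≤ μ j := by
    obtain ⟨m, hm⟩ := (Set.finite_range μ).bddBelow
    exact ⟨m, fun j => hm ⟨j, rfl⟩⟩
  have hbb : ∀ W : Submodule K V,
      BddBelow {s | ∃ w ∈ W, w ≠ (0 : V) ∧ s = Real.log (N' w) - Real.log (N w)} := by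
    intro W
    refine ⟨m - η, ?_⟩
    rintro s ⟨w, _, hw, rfl⟩
    exact log_ratio_ge hN hN' b hb' hw fun j _ => hm j
  have hub : ∀ r ∈ {r | ∃ W : Submodule K V, (i : ℕ) + 1 ≤ Module.finrank K W ∧
      r = sInf {s | ∃ w ∈ W, w ≠ (0 : V) ∧ s = Real.log (N' w) - Real.log (N w)}},
      r ≤ μ i + η := by
    rintro r ⟨W, hW, rfl⟩
    let φ : W →ₗ[K] ({j : Fin n // j < i} → K) :=
      LinearMap.pi fun j => (b.coord j.1) ∘ₗ W.subtype
    have hker : LinearMap.ker φ ≠ ⊥ := by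
      apply LinearMap.ker_ne_bot_of_finrank_lt
      rw [finrank_fintype_fun_eq_card]
      have : Fintype.card {j : Fin n // j < i} = i := by
        rw [Fintype.card_subtype, ← Fin.card_Iio i]; congr 1; ext; simp
      omega
    obtain ⟨w, hwk, hw0⟩ := Submodule.exists_mem_ne_zero_of_ne_bot hker
    have hw0' : (w : V) ≠ 0 := by simpa using hw0
    refine (csInf_le (hbb W) ⟨w, w.2, hw0', rfl⟩).trans ?_
    refine log_ratio_le hN hN' b hb hw0' fun j hj => ?_
    apply hanti
    by_contra! hlt
    exact hj (congrFun (LinearMap.mem_ker.1 hwk) ⟨j, hlt⟩)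
  have hle : specVal K N N' (i + 1) ≤ μ i + η := by
    refine csSup_le ⟨_, ⊤, ?_, rfl⟩ hub
    rw [finrank_top, hn]; exact i.2
  have hge : μ i - η ≤ specVal K N N' (i + 1) := by
    let φ : V →ₗ[K] ({j : Fin n // i < j} → K) := LinearMap.pi fun j => b.coord j.1
    have hdim : (i : ℕ) + 1 ≤ finrank K (LinearMap.ker φ) := by
      have h1 := LinearMap.finrank_range_add_finrank_ker φ
      have h2 := Submodule.finrank_le (LinearMap.range φ)
      rw [finrank_fintype_fun_eq_card] at h2
      have : Fintype.card {j : Fin n // i < j} = n - 1 - i := by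
        rw [Fintype.card_subtype, ← Fin.card_Ioi i]; congr 1; ext; simp
      have := i.2
      omega
    refine le_trans ?_ (le_csSup ⟨_, hub⟩ ⟨LinearMap.ker φ, hdim, rfl⟩)
    have hnb : LinearMap.ker φ ≠ ⊥ := by
      intro h
      rw [h, finrank_bot] at hdim
      omega
    obtain ⟨w0, hw0, hw00⟩ := Submodule.exists_mem_ne_zero_of_ne_bot hnb
    refine le_csInf ⟨_, w0, hw0, hw00, rfl⟩ ?_
    rintro s ⟨w, hwk, hw, rfl⟩
    refine log_ratio_ge hN hN' b hb' hw fun j hj => ?_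
    apply hanti
    by_contra! hlt
    exact hj (congrFun (LinearMap.mem_ker.1 hwk) ⟨j, hlt⟩)
  rw [abs_le]
  constructor <;> linarith

theorem AlmostOrth.reindex {V : Type*} [AddCommGroup V] [Module K V] {ι ι' : Type*}
    {N : V → ℝ} {C : ℝ} {b : Basis ι K V} (hb : AlmostOrth N C b) (e : ι ≃ ι') :
    AlmostOrth N C (b.reindex e) := by
  intro w i
  simpa using hb w (e.symm i)

theorem sum_specVal_bound {V : Type*} [AddCommGroup V] [Module K V] {n : ℕ}
    {N N' : V → ℝ} (hN : IsNAnorm K N) (hN' : IsNAnorm K N') {η : ℝ}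
    (b : Basis (Fin n) K V) (hb : AlmostOrth N (Real.exp η) b)
    (hb' : AlmostOrth N' (Real.exp η) b) :
    |∑ i ∈ Finset.range n, specVal K N N' (i + 1) -
      (∑ i, Real.log (N' (b i)) - ∑ i, Real.log (N (b i)))| ≤ n * η := by
  let μ : Fin n → ℝ := fun j => Real.log (N' (b j)) - Real.log (N (b j))
  let σ := Tuple.sort (fun j => - μ j)
  have hσ : Monotone ((fun j => - μ j) ∘ σ) := Tuple.monotone_sort _
  let B := b.reindex σ.symm
  have hB : ∀ j, B j = b (σ j) := fun j => by simp [B]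
  have hanti : Antitone fun j => Real.log (N' (B j)) - Real.log (N (B j)) := by
    intro j k hjk
    have := hσ hjk
    simp only [hB]
    simp only [Function.comp_apply, μ] at this
    linarith
  have key := specVal_bound hN hN' B (hb.reindex _) (hb'.reindex _) hanti
  rw [Finset.sum_range, ← Finset.sum_sub_distrib]
  have e : ∑ i, (Real.log (N' (b i)) - Real.log (N (b i))) =
      ∑ i, (Real.log (N' (B i)) - Real.log (N (B i))) := by
    simp only [hB]
    exact (Equiv.sum_comp σ μ).symm
  rw [e, ← Finset.sum_sub_distrib]
  refine (Finset.abs_sum_le_sum_abs _ _).trans ?_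
  refine (Finset.sum_le_sum fun i _ => key i).trans ?_
  simp

theorem log_det_antisymm {V : Type*} [AddCommGroup V] [Module K V] {n : ℕ}
    (b b' : Basis (Fin n) K V) : Real.log ‖b.det b'‖ = - Real.log ‖b'.det b‖ := by
  have h : b.det b' * b'.det b = 1 := by
    rw [Basis.det_mul_det, Basis.det_self]
  rw [eq_inv_of_mul_eq_one_left h, norm_inv, Real.log_inv]

theorem log_det_cocycle {V : Type*} [AddCommGroup V] [Module K V] {n : ℕ}
    (b b' b'' : Basis (Fin n) K V) :
    Real.log ‖b.det b'‖ + Real.log ‖b'.det b''‖ = Real.log ‖b.det b''‖ := by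
  rw [← Basis.det_mul_det b b' b'', norm_mul, Real.log_mul]
  · exact norm_ne_zero_iff.2 (b.isUnit_det b').ne_zero
  · exact norm_ne_zero_iff.2 (b'.isUnit_det b'').ne_zero

theorem sum_cocycle [IsUltrametricDist K] [CompleteSpace K] {V : Type*}
    [AddCommGroup V] [Module K V] [FiniteDimensional K V] {N N' N'' : V → ℝ}
    (hN : IsNAnorm K N) (hN' : IsNAnorm K N') (hN'' : IsNAnorm K N'') {n : ℕ}
    (hn : finrank K V = n) :
    ∑ i ∈ Finset.range n, specVal K N N' (i + 1) =
      ∑ i ∈ Finset.range n, specVal K N N'' (i + 1) +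
      ∑ i ∈ Finset.range n, specVal K N'' N' (i + 1) := by
  have main : ∀ η : ℝ, 0 < η →
      |∑ i ∈ Finset.range n, specVal K N N' (i + 1) -
      (∑ i ∈ Finset.range n, specVal K N N'' (i + 1) +
      ∑ i ∈ Finset.range n, specVal K N'' N' (i + 1))| ≤ 6 * n * η := by
    intro η hη
    have hC := Real.one_lt_exp_iff.2 hη
    obtain ⟨a, ha, ha'⟩ := exists_basis n N N' hN hN' hn _ hC
    obtain ⟨b, hb, hb''⟩ := exists_basis n N N'' hN hN'' hn _ hC
    obtain ⟨c, hc'', hc'⟩ := exists_basis n N'' N' hN'' hN' hn _ hC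
    have s1 := abs_le.1 (sum_specVal_bound hN hN' a ha ha')
    have s2 := abs_le.1 (sum_specVal_bound hN hN'' b hb hb'')
    have s3 := abs_le.1 (sum_specVal_bound hN'' hN' c hc'' hc')
    have d1 := det_bound_log hN hη a b ha
    have d2 := det_bound_log hN hη b a hb
    have d3 := det_bound_log hN' hη a c ha'
    have d4 := det_bound_log hN' hη c a hc'
    have d5 := det_bound_log hN'' hη b c hb''
    have d6 := det_bound_log hN'' hη c b hc''
    have e1 := log_det_antisymm a b
    have e2 := log_det_antisymm a c
    have e3 := log_det_antisymm b c
    have e4 := log_det_cocycle a b c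
    rw [abs_le]
    constructor <;> linarith [s1.1, s1.2, s2.1, s2.2, s3.1, s3.2]
  rw [← sub_eq_zero, ← abs_nonpos_iff]
  refine le_of_forall_pos_le_add fun ε hε => ?_
  have h := main (ε / (6 * n + 1)) (by positivity)
  refine h.trans ?_
  rw [zero_add, mul_div_assoc', div_le_iff₀ (by positivity)]
  nlinarith

end RelVolAux

/-- The cocycle property of the relative volume: `vol(N,N') = vol(N,N'') + vol(N'',N')`. -/
theorem relVol_cocycle
    (K V : Type*) [NormedField K] [IsUltrametricDist K] [CompleteSpace K]
    [AddCommGroup V] [Module K V] [FiniteDimensional K V]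
    (N N' N'' : V → ℝ)
    (hN : IsNAnorm K N) (hN' : IsNAnorm K N') (hN'' : IsNAnorm K N'') :
    relVol K V N N' = relVol K V N N'' + relVol K V N'' N' := by
  unfold relVol
  rw [← mul_add, RelVolAux.sum_cocycle hN hN' hN'' rfl]
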